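/- Corollary 3.3. Let (X,f) be an expansive homeomorphism of a compact metric space, Φ = {log φ_n} a subadditive potential on (X,f), and Ψ = {log ψ_n} the subadditive potential on (X×X, f×f) given by ψ_n(x,y) = φ_n(x)·φ_n(y). If μ is an equilibrium state for Φ, then the product measure μ×μ is an equilibrium state for Ψ. -/

import Mathlib

/-!
Each of the three quantities in the variational identity `h + L = P` doubles when `(X, f, Φ, μ)`
is replaced by `(X × X, f × f, Ψ, μ × μ)`.

*Integrals.* `log ψ_n (x, y) = log φ_n x + log φ_n y`, and the marginals of `μ × μ` are `μ`.

*Pressure* (`pressure_prod`). Products of separated sets are separated, which gives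
`Z_n(Ψ, ε) ≥ Z_n(Φ, ε)²` for the partition sums. Conversely, choosing maximum points of `φ_n`
greedily (`exists_greedy`) gives an `(n, ε/2)`-separated set `E` together with an assignment
`c : X → E` such that `x` is `(n, ε/2)`-close to `c x` and `φ_n x ≤ φ_n (c x)`. On an
`(n, ε)`-separated subset of `X × X` the map `c × c` is injective, so
`Z_n(Ψ, ε) ≤ Z_n(Φ, ε/2)²`. No distortion bound on `φ_n` is needed.

*Entropy* (`entropyKS_prod`). `h_{μ×μ}(ξ × ξ) = 2 h_μ(ξ)` for a finite partition `ξ`. Any finite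
partition `r` of `X × X` agrees with a function of `ξ × ξ`, for a suitable `ξ`, off a set of small
measure. If `d` records the value of `r` on that set and is constant elsewhere, then `r` is
determined by `ξ × ξ` and `d`, so `h(r) ≤ h(ξ × ξ) + H(d)` with `H(d)` small
(`entropyOfPart_le_prod`).

Suprema over scales and over partitions are compared by `sSup_eq_two_mul`, which needs no
boundedness: if one family is unbounded, so is the other, and both suprema are `0`. The
real-valued `limsup`s in the pressure are bounded below because the averages
`(1/n) ∫ log φ_n dμ` converge.
-/

open Filter MeasureTheory
open scoped ENNReal

namespace SubEq

variable {X : Type*}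

/-! ### Bowen balls, separated sets, topological pressure -/

/-- The Bowen ball `B_n(x,ε)` with respect to a distance function `ρ` and a map `f`. -/
def bowenBall (ρ : X → X → ℝ) (f : X → X) (n : ℕ) (ε : ℝ) (x : X) : Set X :=
  {y | ∀ k < n, ρ (f^[k] x) (f^[k] y) ≤ ε}

/-- `E` is `(n,ε)`-separated for `f` with respect to the distance `ρ`. -/
def IsSeparatedSet (ρ : X → X → ℝ) (f : X → X) (n : ℕ) (ε : ℝ) (E : Finset X) : Prop :=
  ∀ x ∈ E, ∀ y ∈ E, x ≠ y → ∃ k < n, ε ≤ ρ (f^[k] x) (f^[k] y)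

/-- The subadditive topological pressure
`P(Φ) = lim_{ε→0} limsup_n (1/n) log sup { Σ_{x∈E} φ_n x : E (n,ε)-separated }`;
since the inner quantity is monotone as `ε` decreases, the limit as `ε → 0` is the
supremum over `ε > 0`. -/
noncomputable def pressure (ρ : X → X → ℝ) (f : X → X) (φ : ℕ → X → ℝ) : ℝ :=
  sSup {p : ℝ | ∃ ε > (0:ℝ), p = atTop.limsup (fun n =>
    Real.log (sSup ((fun E : Finset X => ∑ x ∈ E, φ n x) ''
      {E : Finset X | IsSeparatedSet ρ f n ε E})) / n)}

/-- `Φ = {log φ_n}` is a subadditive potential on `(X,f)`: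
each `φ_n` is continuous and positive and
`log φ_{m+n} ≤ log φ_m + log φ_n ∘ f^m`. -/
def IsSubadditivePotential [TopologicalSpace X] (f : X → X) (φ : ℕ → X → ℝ) : Prop :=
  (∀ n, Continuous (φ n)) ∧ (∀ n x, 0 < φ n x) ∧
    ∀ m n, 1 ≤ m → 1 ≤ n → ∀ x : X,
      Real.log (φ (m + n) x) ≤ Real.log (φ m x) + Real.log (φ n (f^[m] x))

/-! ### Kolmogorov–Sinai entropy -/

/-- Static entropy `H_μ(ξ)` of the finite partition of `X` given by the fibers of
`p : X → ι`. -/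
noncomputable def partInfo [MeasurableSpace X] (μ : Measure X) {ι : Type} [Fintype ι]
    (p : X → ι) : ℝ :=
  ∑ i : ι, Real.negMulLog ((μ (p ⁻¹' {i})).toReal)

/-- The dynamical refinement `⋁_{k=0}^{n-1} f^{-k} ξ` of the partition given by `p`. -/
def refinePart (f : X → X) {ι : Type} (p : X → ι) (n : ℕ) : X → (Fin n → ι) :=
  fun x k => p (f^[(k : ℕ)] x)

/-- Entropy of `f` relative to the partition given by `p`; by subadditivity the limit
defining it equals the infimum. -/
noncomputable def entropyOfPart [MeasurableSpace X] (μ : Measure X) (f : X → X)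
    {ι : Type} [Fintype ι] (p : X → ι) : ℝ :=
  ⨅ n : ℕ, partInfo μ (refinePart f p (n + 1)) / (n + 1)

/-- The Kolmogorov–Sinai entropy `h_μ(f)`: the supremum over all finite measurable
partitions of the corresponding partition entropies. -/
noncomputable def entropyKS [MeasurableSpace X] (μ : Measure X) (f : X → X) : ℝ :=
  sSup {h : ℝ | ∃ (m : ℕ) (p : X → Fin m),
    (∀ i, MeasurableSet (p ⁻¹' {i})) ∧ h = entropyOfPart μ f p}

/-! ### Equilibrium states -/

/-- `μ` is an equilibrium state of the subadditive potential `Φ = {log φ_n}`: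
it is an `f`-invariant Borel probability measure with
`h_μ(f) + lim_n (1/n) ∫ log φ_n dμ = P(Φ)`. -/
def IsEqState [TopologicalSpace X] [MeasurableSpace X] (ρ : X → X → ℝ) (f : X → X)
    (φ : ℕ → X → ℝ) (μ : Measure X) : Prop :=
  IsProbabilityMeasure μ ∧ MeasurePreserving f μ μ ∧
    ∃ L : ℝ, Tendsto (fun n => (∫ x, Real.log (φ n x) ∂μ) / n) atTop (nhds L) ∧
      entropyKS μ f + L = pressure ρ f φ

/-- Bounded distortion: there is `C ≥ 1` such that for all sufficiently small `ε > 0`,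
all `x`, `n` and all `y,z ∈ B_n(x,ε)` one has `C⁻¹ ≤ φ_n(y)/φ_n(z) ≤ C`. -/
def HasBoundedDistortion (ρ : X → X → ℝ) (f : X → X) (φ : ℕ → X → ℝ) : Prop :=
  ∃ C : ℝ, 1 ≤ C ∧ ∃ ε₀ > (0:ℝ), ∀ ε, 0 < ε → ε ≤ ε₀ → ∀ (x : X) (n : ℕ),
    ∀ y ∈ bowenBall ρ f n ε x, ∀ z ∈ bowenBall ρ f n ε x,
      C⁻¹ ≤ φ n y / φ n z ∧ φ n y / φ n z ≤ C

/-- The lower subadditive Gibbs property: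
for every `ε > 0` there is `C ≥ 1` with `μ(B_n(x,ε)) ≥ C⁻¹ e^{-nP(Φ)} φ_n(x)`. -/
def HasLowerGibbs [TopologicalSpace X] [MeasurableSpace X] (ρ : X → X → ℝ) (f : X → X)
    (φ : ℕ → X → ℝ) (μ : Measure X) : Prop :=
  ∀ ε > (0:ℝ), ∃ C : ℝ, 1 ≤ C ∧ ∀ (x : X) (n : ℕ),
    ENNReal.ofReal (C⁻¹ * Real.exp (-(n : ℝ) * pressure ρ f φ) * φ n x)
      ≤ μ (bowenBall ρ f n ε x)

/-- Expansivity of an invertible map `f` with inverse `finv`. -/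
def IsExpansive (ρ : X → X → ℝ) (f finv : X → X) : Prop :=
  ∃ ε₀ > (0:ℝ), ∀ x y : X,
    (∀ n : ℕ, ρ (f^[n] x) (f^[n] y) ≤ ε₀ ∧ ρ (finv^[n] x) (finv^[n] y) ≤ ε₀) → x = y

/-! ### Mixing properties -/

/-- The Kolmogorov property of the invertible measure-preserving system `(X,μ,f)`
(`finv` is the inverse of `f`): there is a sub-σ-algebra `K` with `K ⊆ fK`,
`⋁_{n≥0} f^n K` the full σ-algebra, and `⋂_{n≥0} f^{-n} K` trivial mod `μ`. -/
def HasKProperty [m : MeasurableSpace X] (μ : Measure X) (f finv : X → X) : Prop :=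
  ∃ K : MeasurableSpace X, K ≤ m ∧ K ≤ K.map f ∧
    (⨆ n : ℕ, K.map (f^[n])) = m ∧
    ∀ A : Set X, MeasurableSet[⨅ n : ℕ, K.map (finv^[n])] A → μ A = 0 ∨ μ A = 1

/-- Mixing of a measure-preserving system. -/
def IsMixing [MeasurableSpace X] (μ : Measure X) (f : X → X) : Prop :=
  ∀ A B : Set X, MeasurableSet A → MeasurableSet B →
    Tendsto (fun n => μ ((f^[n]) ⁻¹' A ∩ B)) atTop (nhds (μ A * μ B))

/-- A set of natural numbers has upper density zero. -/
def UpperDensityZero (E : Set ℕ) : Prop :=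
  Tendsto (fun n => (Nat.card (E ∩ Set.Iio n : Set ℕ) : ℝ) / n) atTop (nhds 0)

/-- Weak mixing: for all measurable `A,B` there is a set `E ⊆ ℕ` of upper density zero
such that `μ(f^n A ∩ B) → μ(A)μ(B)` along `n ∉ E`. -/
def IsWeaklyMixing [MeasurableSpace X] (μ : Measure X) (f : X → X) : Prop :=
  ∀ A B : Set X, MeasurableSet A → MeasurableSet B →
    ∃ E : Set ℕ, UpperDensityZero E ∧
      Tendsto (fun n => μ ((f^[n]) ⁻¹' A ∩ B)) (atTop ⊓ Filter.principal Eᶜ)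
        (nhds (μ A * μ B))

/-- Total ergodicity: `f^n` is ergodic for every `n ≥ 1`. -/
def IsTotallyErgodic [MeasurableSpace X] (μ : Measure X) (f : X → X) : Prop :=
  ∀ n : ℕ, 1 ≤ n → Ergodic (f^[n]) μ

/-! ### Measure-theoretic isomorphism and the Bernoulli property -/

/-- Measure-theoretic isomorphism of the systems `(X,μ,f)` and `(Y,ν,g)`. -/
def IsMeasureIso {Y : Type*} [MeasurableSpace X] [MeasurableSpace Y]
    (μ : Measure X) (ν : Measure Y) (f : X → X) (g : Y → Y) : Prop :=
  ∃ Θ : X → Y, Measurable Θ ∧ Measure.map Θ μ = ν ∧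
    (∀ᵐ x ∂μ, Θ (f x) = g (Θ x)) ∧
    ∃ Ψ : Y → X, Measurable Ψ ∧ (∀ᵐ x ∂μ, Ψ (Θ x) = x) ∧ (∀ᵐ y ∂ν, Θ (Ψ y) = y)

/-- The left shift on a full shift space `ℤ → ι`. -/
def fullShift {ι : Type*} : (ℤ → ι) → (ℤ → ι) := fun x i => x (i + 1)

/-- `(X,μ,f)` is Bernoulli: it is measurably isomorphic to a Bernoulli shift, i.e. to a
two-sided full shift on a finite alphabet equipped with a product (i.i.d.) measure. -/
def IsBernoulli [MeasurableSpace X] (μ : Measure X) (f : X → X) : Prop :=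
  ∃ (m : ℕ) (p : Fin m → ℝ≥0∞), (∑ i : Fin m, p i) = 1 ∧
    ∃ ν : Measure (ℤ → Fin m),
      (∀ (s : Finset ℤ) (a : ℤ → Fin m),
        ν {x : ℤ → Fin m | ∀ i ∈ s, x i = a i} = ∏ i ∈ s, p (a i)) ∧
      IsMeasureIso μ ν f fullShift

/-! ### Pressure of the product system -/

section Pressure

variable [MetricSpace X] [CompactSpace X]

/-- The partition sum at time `n` and scale `ε`: the supremum of `∑_{x ∈ E} ψ x` over
`(n,ε)`-separated sets `E`. -/
noncomputable def partSum {Y : Type*} (ρ : Y → Y → ℝ) (f : Y → Y) (n : ℕ) (ε : ℝ)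
    (ψ : Y → ℝ) : ℝ :=
  sSup ((fun E : Finset Y => ∑ x ∈ E, ψ x) '' {E : Finset Y | IsSeparatedSet ρ f n ε E})

/-- Separated sets grow at most exponentially: the itineraries of the points of an
`(n,ε)`-separated set through a finite cover by `ε/2`-balls are distinct. -/
lemma exists_card_separated_le (f : X → X) {ε : ℝ} (hε : 0 < ε) :
    ∃ N : ℕ, ∀ (n : ℕ) (E : Finset X), IsSeparatedSet dist f n ε E → E.card ≤ N ^ n := by
  classical
  obtain ⟨t, -, htf, ht⟩ :=
    (isCompact_univ (X := X)).finite_cover_balls (half_pos hε)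
  choose c hc hcd using fun x : X => show ∃ z ∈ t, dist x z < ε / 2 by
    simpa using ht (Set.mem_univ x)
  have := htf.fintype
  refine ⟨Fintype.card t, fun n E hE => ?_⟩
  have h : E.card ≤ (Finset.univ : Finset (Fin n → t)).card := by
    refine Finset.card_le_card_of_injOn
      (fun x k => (⟨c (f^[(k : ℕ)] x), hc _⟩ : t)) (fun _ _ => by simp) ?_
    intro x hx y hy hxy
    by_contra hne
    obtain ⟨k, hk, hd⟩ := hE x hx y hy hne
    have h1 : c (f^[k] x) = c (f^[k] y) := by
      simpa using congrFun hxy ⟨k, hk⟩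
    have h2 := hcd (f^[k] x)
    have h3 := hcd (f^[k] y)
    rw [h1] at h2
    have := dist_triangle_right (f^[k] x) (f^[k] y) (c (f^[k] y))
    linarith
  simpa using h

lemma bddAbove_partSum (f : X → X) {ε : ℝ} (hε : 0 < ε) (n : ℕ) {ψ : X → ℝ}
    (hψ : Continuous ψ) :
    BddAbove ((fun E : Finset X => ∑ x ∈ E, ψ x) ''
      {E : Finset X | IsSeparatedSet dist f n ε E}) := by
  obtain ⟨N, hN⟩ := exists_card_separated_le f hε
  obtain ⟨M, hM⟩ := (isCompact_range hψ).bddAbove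
  refine ⟨(N ^ n : ℕ) * |M|, ?_⟩
  rintro _ ⟨E, hE, rfl⟩
  calc ∑ x ∈ E, ψ x ≤ ∑ x ∈ E, |M| :=
        Finset.sum_le_sum fun x _ => (hM ⟨x, rfl⟩).trans (le_abs_self M)
    _ = (E.card : ℝ) * |M| := by simp
    _ ≤ (N ^ n : ℕ) * |M| := by
        gcongr
        exact hN n E hE

lemma sum_le_partSum {f : X → X} {ε : ℝ} (hε : 0 < ε) {n : ℕ} {ψ : X → ℝ}
    (hψ : Continuous ψ) {E : Finset X} (hE : IsSeparatedSet dist f n ε E) :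
    ∑ x ∈ E, ψ x ≤ partSum dist f n ε ψ :=
  le_csSup (bddAbove_partSum f hε n hψ) ⟨E, hE, rfl⟩

lemma le_partSum (f : X → X) {ε : ℝ} (hε : 0 < ε) (n : ℕ) {ψ : X → ℝ}
    (hψ : Continuous ψ) (x : X) : ψ x ≤ partSum dist f n ε ψ := by
  have h : IsSeparatedSet dist f n ε {x} := by
    intro a ha b hb hab
    simp only [Finset.mem_singleton] at ha hb
    exact absurd (ha.trans hb.symm) hab
  simpa using sum_le_partSum hε hψ h

lemma partSum_le {Y : Type*} {ρ : Y → Y → ℝ} {f : Y → Y} {n : ℕ} {ε : ℝ} {ψ : Y → ℝ} {a : ℝ}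
    (h : ∀ E : Finset Y, IsSeparatedSet ρ f n ε E → ∑ x ∈ E, ψ x ≤ a) :
    partSum ρ f n ε ψ ≤ a := by
  refine csSup_le ⟨_, ∅, ?_, rfl⟩ ?_
  · intro x hx
    simp at hx
  · rintro _ ⟨E, hE, rfl⟩
    exact h E hE

/-- Greedy choice of separated points: repeatedly picking a maximum point of `ψ` on the part of
`X` not yet covered produces an `(n,ε)`-separated set `E` such that every `x` lies
`(n,ε)`-close to some `e ∈ E` with `ψ x ≤ ψ e`. -/
lemma exists_greedy {f : X → X} (hf : Continuous f) {ε : ℝ} (hε : 0 < ε) (n : ℕ) {ψ : X → ℝ}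
    (hψ : Continuous ψ) :
    ∃ E : Finset X, IsSeparatedSet dist f n ε E ∧
      ∀ x, ∃ e ∈ E, (∀ k < n, dist (f^[k] e) (f^[k] x) < ε) ∧ ψ x ≤ ψ e := by
  classical
  by_contra! hcon
  obtain ⟨N, hN⟩ := exists_card_separated_le f hε
  have key : ∀ j : ℕ, ∃ E : Finset X, IsSeparatedSet dist f n ε E ∧ E.card = j ∧
      ∀ x, (∃ e ∈ E, (∀ k < n, dist (f^[k] e) (f^[k] x) < ε) ∧ ψ x ≤ ψ e) ∨
        (∀ e ∈ E, ∃ k < n, ε ≤ dist (f^[k] e) (f^[k] x)) := by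
    intro j
    induction j with
    | zero => exact ⟨∅, by simp [IsSeparatedSet], by simp, by simp⟩
    | succ j ih =>
      obtain ⟨E, hE, hcard, hcov⟩ := ih
      obtain ⟨x₀, hx₀⟩ := hcon E hE
      let U : Set X := {x | ∀ e ∈ E, ∃ k < n, ε ≤ dist (f^[k] e) (f^[k] x)}
      have hU : IsClosed U := by
        have : U = ⋂ e ∈ E, ⋃ k ∈ Set.Iio n, {x | ε ≤ dist (f^[k] e) (f^[k] x)} := by
          ext x; simp [U]
        rw [this]
        refine isClosed_biInter fun e _ => (Set.finite_Iio n).isClosed_biUnion fun k _ => ?_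
        exact isClosed_le continuous_const (continuous_const.dist (hf.iterate k))
      have hx₀U : x₀ ∈ U := by
        rcases hcov x₀ with ⟨e, he, h1, h2⟩ | h
        · exact absurd h2 (not_le.2 (hx₀ e he h1))
        · exact h
      obtain ⟨m, hmU, hm⟩ := hU.isCompact.exists_isMaxOn ⟨x₀, hx₀U⟩ hψ.continuousOn
      have hself : ∀ k < n, dist (f^[k] m) (f^[k] m) < ε := fun k _ => by simpa using hε
      have hmE : m ∉ E := fun h => by
        obtain ⟨k, hk, h'⟩ := hmU m h
        exact absurd h' (not_le.2 (hself k hk))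
      refine ⟨insert m E, ?_, by rw [Finset.card_insert_of_notMem hmE, hcard], fun x => ?_⟩
      · intro x hx y hy hxy
        rcases Finset.mem_insert.1 hx with rfl | hx' <;>
          rcases Finset.mem_insert.1 hy with rfl | hy'
        · exact absurd rfl hxy
        · obtain ⟨k, hk, h⟩ := hmU y hy'
          exact ⟨k, hk, by rwa [dist_comm]⟩
        · exact hmU x hx'
        · exact hE x hx' y hy' hxy
      · rcases hcov x with ⟨e, he, h⟩ | h
        · exact Or.inl ⟨e, Finset.mem_insert_of_mem he, h⟩
        · by_cases hc : ∀ k < n, dist (f^[k] m) (f^[k] x) < ε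
          · exact Or.inl ⟨m, Finset.mem_insert_self _ _, hc, hm h⟩
          · push Not at hc
            refine Or.inr fun e he => ?_
            rcases Finset.mem_insert.1 he with rfl | he
            · exact hc
            · exact h e he
  obtain ⟨E, hE, hcard, -⟩ := key (N ^ n + 1)
  have := hN n E hE
  omega

/-- Separated sets in `X × X` at scale `ε` against separated sets in `X` at scale `ε/2`: each
product of two greedy Bowen balls of radius `ε/2` contains at most one point of the former. -/
lemma sum_prod_le {f : X → X} (hf : Continuous f) {ε : ℝ} (hε : 0 < ε) {n : ℕ} {ψ : X → ℝ}
    (hψ : Continuous ψ) (hpos : ∀ x, 0 < ψ x) {F : Finset (X × X)}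
    (hF : IsSeparatedSet dist (Prod.map f f) n ε F) :
    ∑ p ∈ F, ψ p.1 * ψ p.2 ≤ partSum dist f n (ε / 2) ψ ^ 2 := by
  classical
  obtain ⟨E, hE, hcov⟩ := exists_greedy hf (half_pos hε) n hψ
  choose c hcE hcd hcψ using hcov
  have hinj : Set.InjOn (fun p : X × X => (c p.1, c p.2)) F := by
    intro p hp q hq hpq
    by_contra hne
    obtain ⟨k, hk, hd⟩ := hF p hp q hq hne
    simp only [Prod.mk.injEq] at hpq
    rw [Prod.map_iterate, Prod.dist_eq] at hd
    have h1 := hcd p.1 k hk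
    have h2 := hcd q.1 k hk
    have h3 := hcd p.2 k hk
    have h4 := hcd q.2 k hk
    rw [hpq.1] at h1
    rw [hpq.2] at h3
    have h5 := dist_triangle_left (f^[k] p.1) (f^[k] q.1) (f^[k] (c q.1))
    have h6 := dist_triangle_left (f^[k] p.2) (f^[k] q.2) (f^[k] (c q.2))
    rcases le_max_iff.1 hd with h | h <;> simp only [Prod.map_fst, Prod.map_snd] at h <;> linarith
  calc ∑ p ∈ F, ψ p.1 * ψ p.2 ≤ ∑ p ∈ F, ψ (c p.1) * ψ (c p.2) :=
        Finset.sum_le_sum fun p _ =>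
          mul_le_mul (hcψ _) (hcψ _) (hpos _).le (hpos _).le
    _ = ∑ q ∈ F.image (fun p : X × X => (c p.1, c p.2)), ψ q.1 * ψ q.2 :=
        (Finset.sum_image (f := fun q : X × X => ψ q.1 * ψ q.2) hinj).symm
    _ ≤ ∑ q ∈ E ×ˢ E, ψ q.1 * ψ q.2 := by
        refine Finset.sum_le_sum_of_subset_of_nonneg ?_ fun q _ _ =>
          (mul_pos (hpos _) (hpos _)).le
        intro q hq
        obtain ⟨p, -, rfl⟩ := Finset.mem_image.1 hq
        exact Finset.mk_mem_product (hcE _) (hcE _)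
    _ = (∑ x ∈ E, ψ x) ^ 2 := by
        rw [sq, Finset.sum_mul_sum, Finset.sum_product]
    _ ≤ partSum dist f n (ε / 2) ψ ^ 2 :=
        pow_le_pow_left₀ (Finset.sum_nonneg fun x _ => (hpos x).le)
          (sum_le_partSum (half_pos hε) hψ hE) 2

lemma partSum_prod_le {f : X → X} (hf : Continuous f) {ε : ℝ} (hε : 0 < ε) (n : ℕ) {ψ : X → ℝ}
    (hψ : Continuous ψ) (hpos : ∀ x, 0 < ψ x) :
    partSum dist (Prod.map f f) n ε (fun p => ψ p.1 * ψ p.2)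
      ≤ partSum dist f n (ε / 2) ψ ^ 2 :=
  partSum_le fun _ hF => sum_prod_le hf hε hψ hpos hF

/-- The product of two `(n,ε)`-separated sets is `(n,ε)`-separated. -/
lemma le_partSum_prod [Nonempty X] (f : X → X) {ε : ℝ} (hε : 0 < ε) (n : ℕ) {ψ : X → ℝ}
    (hψ : Continuous ψ) (hpos : ∀ x, 0 < ψ x) :
    partSum dist f n ε ψ ^ 2
      ≤ partSum dist (Prod.map f f) n ε (fun p => ψ p.1 * ψ p.2) := by
  set W := partSum dist (Prod.map f f) n ε (fun p : X × X => ψ p.1 * ψ p.2) with hW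
  have hcont : Continuous fun p : X × X => ψ p.1 * ψ p.2 := by fun_prop
  have h : partSum dist f n ε ψ ≤ √W := by
    refine partSum_le fun E hE => Real.le_sqrt_of_sq_le ?_
    have hs : IsSeparatedSet dist (Prod.map f f) n ε (E ×ˢ E) := by
      intro p hp q hq hpq
      rw [Finset.mem_product] at hp hq
      by_cases h1 : p.1 = q.1
      · have h2 : p.2 ≠ q.2 := fun h => hpq (Prod.ext h1 h)
        obtain ⟨k, hk, hd⟩ := hE _ hp.2 _ hq.2 h2
        refine ⟨k, hk, ?_⟩
        rw [Prod.map_iterate, Prod.dist_eq]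
        exact hd.trans (le_max_right _ _)
      · obtain ⟨k, hk, hd⟩ := hE _ hp.1 _ hq.1 h1
        refine ⟨k, hk, ?_⟩
        rw [Prod.map_iterate, Prod.dist_eq]
        exact hd.trans (le_max_left _ _)
    have := sum_le_partSum hε hcont hs
    rwa [Finset.sum_product, ← Finset.sum_mul_sum, ← sq] at this
  have x : X := Classical.arbitrary X
  have h0 : 0 ≤ partSum dist f n ε ψ := (hpos x).le.trans (le_partSum f hε n hψ x)
  have hW0 : 0 ≤ W := (mul_pos (hpos x) (hpos x)).le.trans
    (le_partSum (Prod.map f f) hε n hcont (x, x))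
  calc partSum dist f n ε ψ ^ 2 ≤ √W ^ 2 := pow_le_pow_left₀ h0 h 2
    _ = W := Real.sq_sqrt hW0

/-- At every scale the exponential growth rates of the partition sums of a subadditive potential
are bounded above, since both the separated sets and the potential grow at most exponentially. -/
lemma exists_log_partSum_le [Nonempty X] {f : X → X} {φ : ℕ → X → ℝ}
    (hφ : IsSubadditivePotential f φ) {ε : ℝ} (hε : 0 < ε) :
    ∃ C : ℝ, ∀ n : ℕ, Real.log (partSum dist f n ε (φ n)) / n ≤ C := by
  obtain ⟨hc, hpos, hsub⟩ := hφ
  obtain ⟨N, hN⟩ := exists_card_separated_le f hε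
  have x₀ : X := Classical.arbitrary X
  have hlog1 : Continuous fun x => Real.log (φ 1 x) := (hc 1).log fun x => (hpos 1 x).ne'
  obtain ⟨M, hM⟩ := (isCompact_range hlog1).bddAbove
  have hM' : ∀ x, Real.log (φ 1 x) ≤ M := fun x => hM ⟨x, rfl⟩
  have hbound : ∀ n : ℕ, ∀ x, Real.log (φ (n + 1) x) ≤ (n + 1 : ℕ) * M := by
    intro n
    induction n with
    | zero => intro x; simpa using hM' x
    | succ n ih =>
      intro x
      have h1 := hsub (n + 1) 1 (by omega) le_rfl x
      have h2 := ih x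
      have h3 := hM' (f^[n + 1] x)
      push_cast at h2 ⊢
      linarith
  have hN1 : 1 ≤ N := by
    simpa using hN 1 {x₀} fun a ha b hb hab => by
      simp only [Finset.mem_singleton] at ha hb
      exact absurd (ha.trans hb.symm) hab
  refine ⟨max 0 (Real.log N + M), fun n => ?_⟩
  rcases Nat.eq_zero_or_pos n with rfl | hn
  · simp
  refine le_max_of_le_right ?_
  have hn' : (0 : ℝ) < n := by exact_mod_cast hn
  have hle : partSum dist f n ε (φ n) ≤ N ^ n * Real.exp (n * M) := by
    refine partSum_le fun E hE => ?_
    calc ∑ x ∈ E, φ n x ≤ ∑ x ∈ E, Real.exp (n * M) := by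
          refine Finset.sum_le_sum fun x _ => ?_
          rw [← Real.log_le_iff_le_exp (hpos n x)]
          obtain ⟨m, rfl⟩ := Nat.exists_eq_succ_of_ne_zero hn.ne'
          exact hbound m x
      _ = E.card * Real.exp (n * M) := by simp
      _ ≤ N ^ n * Real.exp (n * M) := by
          gcongr
          exact_mod_cast hN n E hE
  have hN0 : (0 : ℝ) < N := by exact_mod_cast hN1
  have hP : 0 < partSum dist f n ε (φ n) :=
    (hpos n x₀).trans_le (le_partSum f hε n (hc n) x₀)
  rw [div_le_iff₀ hn']
  calc Real.log (partSum dist f n ε (φ n)) ≤ Real.log (N ^ n * Real.exp (n * M)) :=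
        Real.log_le_log hP hle
    _ = (Real.log N + M) * n := by
        rw [Real.log_mul (by positivity) (Real.exp_ne_zero _), Real.log_exp, Real.log_pow]
        ring

/-- `sSup B = 2 * sSup A` for sets of reals that are cofinal in each other up to doubling. This
includes the case where both are unbounded, so that both suprema take the value `0`. -/
lemma sSup_eq_two_mul {A B : Set ℝ} (hA : A.Nonempty)
    (hAB : ∀ a ∈ A, ∃ b ∈ B, 2 * a ≤ b)
    (hBA : ∀ b ∈ B, ∀ δ > 0, ∃ a ∈ A, b ≤ 2 * a + δ) : sSup B = 2 * sSup A := by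
  have hB : B.Nonempty := by
    obtain ⟨a, ha⟩ := hA
    obtain ⟨b, hb, -⟩ := hAB a ha
    exact ⟨b, hb⟩
  by_cases hbA : BddAbove A
  · have hub : ∀ b ∈ B, b ≤ 2 * sSup A := by
      intro b hb
      refine le_of_forall_pos_le_add fun δ hδ => ?_
      obtain ⟨a, ha, h⟩ := hBA b hb δ hδ
      have := le_csSup hbA ha
      linarith
    refine le_antisymm (csSup_le hB hub) ?_
    have : sSup A ≤ sSup B / 2 := by
      refine csSup_le hA fun a ha => ?_
      obtain ⟨b, hb, h⟩ := hAB a ha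
      have := le_csSup ⟨_, hub⟩ hb
      linarith
    linarith
  · have hbB : ¬ BddAbove B := by
      rintro ⟨M, hM⟩
      refine hbA ⟨M / 2, fun a ha => ?_⟩
      obtain ⟨b, hb, h⟩ := hAB a ha
      have := hM hb
      linarith
    rw [Real.sSup_of_not_bddAbove hbA, Real.sSup_of_not_bddAbove hbB, mul_zero]

/-- `P(Ψ) = 2 P(Φ)`. The lower bound `c` on the averages of `log φ_n` along some points keeps the
real-valued `limsup`s away from `-∞`. -/
lemma pressure_prod [Nonempty X] {f : X → X} (hf : Continuous f) {φ : ℕ → X → ℝ}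
    (hφ : IsSubadditivePotential f φ) {c : ℝ}
    (hlow : ∀ᶠ n : ℕ in atTop, ∃ x, c ≤ Real.log (φ n x) / n) :
    pressure dist (Prod.map f f) (fun n p => φ n p.1 * φ n p.2) = 2 * pressure dist f φ := by
  have hc := hφ.1
  have hpos := hφ.2.1
  have x₀ : X := Classical.arbitrary X
  let u : ℝ → ℕ → ℝ := fun ε n => Real.log (partSum dist f n ε (φ n)) / n
  let v : ℝ → ℕ → ℝ := fun ε n => Real.log (partSum dist (Prod.map f f) n ε
    (fun p => φ n p.1 * φ n p.2)) / n
  have hPpos : ∀ ε > 0, ∀ n, 0 < partSum dist f n ε (φ n) := fun ε hε n =>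
    (hpos n x₀).trans_le (le_partSum f hε n (hc n) x₀)
  have hvu : ∀ ε > 0, ∀ n, v ε n ≤ 2 * u (ε / 2) n := by
    intro ε hε n
    have h1 : (0 : ℝ) < partSum dist (Prod.map f f) n ε (fun p => φ n p.1 * φ n p.2) :=
      (pow_pos (hPpos ε hε n) 2).trans_le (le_partSum_prod f hε n (hc n) (hpos n))
    have h2 := Real.log_le_log h1 (partSum_prod_le hf hε n (hc n) (hpos n))
    rw [Real.log_pow] at h2
    simp only [u, v]
    rw [← mul_div_assoc]
    exact div_le_div_of_nonneg_right (by exact_mod_cast h2) (Nat.cast_nonneg n)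
  have huv : ∀ ε > 0, ∀ n, 2 * u ε n ≤ v ε n := by
    intro ε hε n
    have h2 := Real.log_le_log (pow_pos (hPpos ε hε n) 2)
      (le_partSum_prod f hε n (hc n) (hpos n))
    rw [Real.log_pow] at h2
    simp only [u, v]
    rw [← mul_div_assoc]
    exact div_le_div_of_nonneg_right (by exact_mod_cast h2) (Nat.cast_nonneg n)
  have hub : ∀ ε > 0, ∃ C, ∀ n, u ε n ≤ C := fun ε hε => exists_log_partSum_le hφ hε
  have hlb : ∀ ε > 0, ∀ᶠ n in atTop, c ≤ u ε n := by
    intro ε hε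
    filter_upwards [hlow] with n ⟨x, hx⟩
    refine hx.trans (div_le_div_of_nonneg_right ?_ (Nat.cast_nonneg n))
    exact Real.log_le_log (hpos n x) (le_partSum f hε n (hc n) x)
  have hbdd : ∀ ε > 0, IsBoundedUnder (· ≤ ·) atTop (u ε) := fun ε hε => by
    obtain ⟨C, hC⟩ := hub ε hε
    exact ⟨C, by simpa using ⟨0, fun n _ => hC n⟩⟩
  have hcob : ∀ ε > 0, IsCoboundedUnder (· ≤ ·) atTop (u ε) := fun ε hε =>
    IsBoundedUnder.isCoboundedUnder_le ⟨c, by simpa using hlb ε hε⟩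
  have hmul : ∀ ε > 0, limsup (fun n => 2 * u ε n) atTop = 2 * limsup (u ε) atTop := by
    intro ε hε
    have hmono : Monotone fun t : ℝ => 2 * t := fun a b h => by
      show 2 * a ≤ 2 * b
      linarith
    exact (hmono.map_limsup_of_continuousAt (u ε) (by fun_prop) (hbdd ε hε) (hcob ε hε)).symm
  have hbdd2 : ∀ ε > 0, IsBoundedUnder (· ≤ ·) atTop (fun n => 2 * u ε n) := fun ε hε => by
    obtain ⟨C, hC⟩ := hub ε hε
    refine ⟨2 * C, ?_⟩
    simp only [eventually_map]
    exact Eventually.of_forall fun n => by linarith [hC n]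
  have hcob2 : ∀ ε > 0, IsCoboundedUnder (· ≤ ·) atTop (fun n => 2 * u ε n) := fun ε hε => by
    refine IsBoundedUnder.isCoboundedUnder_le ⟨2 * c, ?_⟩
    simp only [eventually_map]
    filter_upwards [hlb ε hε] with n hn
    show 2 * c ≤ 2 * u ε n
    linarith
  have hvb : ∀ ε > 0, IsBoundedUnder (· ≤ ·) atTop (v ε) := fun ε hε =>
    (hbdd2 (ε / 2) (half_pos hε)).mono_le (Eventually.of_forall (hvu ε hε))
  have hvc : ∀ ε > 0, IsCoboundedUnder (· ≤ ·) atTop (v ε) := fun ε hε => by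
    refine IsBoundedUnder.isCoboundedUnder_le ⟨2 * c, ?_⟩
    simp only [eventually_map]
    filter_upwards [hlb ε hε] with n hn
    show 2 * c ≤ v ε n
    linarith [huv ε hε n]
  unfold pressure
  refine sSup_eq_two_mul ⟨_, 1, one_pos, rfl⟩ ?_ ?_
  · rintro _ ⟨ε, hε, rfl⟩
    refine ⟨_, ⟨ε, hε, rfl⟩, ?_⟩
    have := limsup_le_limsup (Eventually.of_forall (huv ε hε)) (hcob2 ε hε) (hvb ε hε)
    rwa [hmul ε hε] at this
  · rintro _ ⟨ε, hε, rfl⟩ δ hδ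
    refine ⟨_, ⟨ε / 2, half_pos hε, rfl⟩, ?_⟩
    have := limsup_le_limsup (Eventually.of_forall (hvu ε hε)) (hvc ε hε)
      (hbdd2 (ε / 2) (half_pos hε))
    rw [hmul _ (half_pos hε)] at this
    exact this.trans (le_add_of_nonneg_right hδ.le)

end Pressure

/-! ### Entropy of the product measure -/

section Entropy

variable [MeasurableSpace X]

lemma partInfo_nonneg (μ : Measure X) [IsProbabilityMeasure μ] {ι : Type} [Fintype ι]
    (p : X → ι) : 0 ≤ partInfo μ p :=
  Finset.sum_nonneg fun i _ => Real.negMulLog_nonneg ENNReal.toReal_nonneg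
    (measureReal_le_one (μ := μ))

/-- Pulling a partition back along a measure-preserving map does not change its entropy. -/
lemma partInfo_comp {Y : Type*} [MeasurableSpace Y] {μ : Measure X} {ν : Measure Y}
    {T : X → Y} (hT : MeasurePreserving T μ ν) {ι : Type} [Fintype ι] [MeasurableSpace ι]
    [MeasurableSingletonClass ι] {p : Y → ι} (hp : Measurable p) :
    partInfo μ (p ∘ T) = partInfo ν p := by
  unfold partInfo
  refine Finset.sum_congr rfl fun i _ => ?_
  rw [Set.preimage_comp, hT.measure_preimage (hp (measurableSet_singleton i)).nullMeasurableSet]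

lemma toReal_measure_eq_sum (μ : Measure X) [IsProbabilityMeasure μ] {ι : Type} [Fintype ι]
    [MeasurableSpace ι] [MeasurableSingletonClass ι] {p : X → ι} (hp : Measurable p)
    (s : Finset ι) : (μ (p ⁻¹' s)).toReal = ∑ i ∈ s, (μ (p ⁻¹' {i})).toReal :=
  (sum_measureReal_preimage_singleton (μ := μ) s
    fun _ _ => hp (measurableSet_singleton _)).symm

lemma negMulLog_sum_le {ι : Type} (s : Finset ι) {w : ι → ℝ} (hw : ∀ i, 0 ≤ w i) :
    Real.negMulLog (∑ i ∈ s, w i) ≤ ∑ i ∈ s, Real.negMulLog (w i) := by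
  rw [Real.negMulLog, ← Finset.sum_neg_distrib, Finset.sum_mul]
  refine Finset.sum_le_sum fun i hi => ?_
  rw [Real.negMulLog]
  rcases (hw i).eq_or_lt with h | h
  · simp [← h]
  · have h1 := Real.log_le_log h (Finset.single_le_sum (fun j _ => hw j) hi)
    nlinarith

/-- A coarser partition has smaller entropy. -/
lemma partInfo_mono (μ : Measure X) [IsProbabilityMeasure μ] {ι κ : Type} [Fintype ι] [Fintype κ]
    [MeasurableSpace ι] [MeasurableSingletonClass ι] {p : X → ι} (hp : Measurable p)
    (g : ι → κ) : partInfo μ (g ∘ p) ≤ partInfo μ p := by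
  classical
  unfold partInfo
  rw [← Finset.sum_fiberwise Finset.univ g]
  refine Finset.sum_le_sum fun j _ => ?_
  have h : (g ∘ p) ⁻¹' {j} = p ⁻¹' (({i | g i = j} : Finset ι) : Set ι) := by
    ext x; simp
  rw [h, toReal_measure_eq_sum μ hp]
  exact negMulLog_sum_le _ fun _ => ENNReal.toReal_nonneg

/-- Gibbs' inequality in the form needed for the subadditivity of entropy. -/
lemma negMulLog_le_of_le {w a b : ℝ} (hw : 0 ≤ w) (hwa : w ≤ a) (hwb : w ≤ b) :
    Real.negMulLog w ≤ -w * Real.log a + -w * Real.log b + (a * b - w) := by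
  rcases hw.eq_or_lt with rfl | h
  · simpa using mul_nonneg hwa hwb
  · have ha : 0 < a := h.trans_le hwa
    have hb : 0 < b := h.trans_le hwb
    have h1 := Real.log_le_sub_one_of_pos (show 0 < a * b / w by positivity)
    rw [Real.log_div (by positivity) h.ne', Real.log_mul ha.ne' hb.ne'] at h1
    have h2 := mul_le_mul_of_nonneg_left h1 hw
    have h3 : w * (a * b / w - 1) = a * b - w := by field_simp
    rw [h3] at h2
    rw [Real.negMulLog]
    linarith

/-- Subadditivity of entropy: `H(p ∨ q) ≤ H(p) + H(q)`. -/
lemma partInfo_pair_le (μ : Measure X) [IsProbabilityMeasure μ] {ι κ : Type} [Fintype ι]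
    [Fintype κ] [MeasurableSpace ι] [MeasurableSingletonClass ι] [MeasurableSpace κ]
    [MeasurableSingletonClass κ] {p : X → ι} {q : X → κ} (hp : Measurable p)
    (hq : Measurable q) :
    partInfo μ (fun x => (p x, q x)) ≤ partInfo μ p + partInfo μ q := by
  classical
  let w : ι → κ → ℝ := fun i j => (μ ((fun x => (p x, q x)) ⁻¹' {(i, j)})).toReal
  let a : ι → ℝ := fun i => (μ (p ⁻¹' {i})).toReal
  let b : κ → ℝ := fun j => (μ (q ⁻¹' {j})).toReal
  have hpq : Measurable fun x => (p x, q x) := hp.prodMk hq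
  have ha : ∀ i, ∑ j, w i j = a i := fun i => by
    have h : p ⁻¹' {i} = (fun x => (p x, q x)) ⁻¹' (({i} ×ˢ Finset.univ : Finset (ι × κ))) := by
      ext x; simp [eq_comm]
    simp only [a, w]
    rw [h, toReal_measure_eq_sum μ hpq, Finset.sum_product, Finset.sum_singleton]
  have hb : ∀ j, ∑ i, w i j = b j := fun j => by
    have h : q ⁻¹' {j} = (fun x => (p x, q x)) ⁻¹' ((Finset.univ ×ˢ {j} : Finset (ι × κ))) := by
      ext x; simp [eq_comm]
    simp only [b, w]
    rw [h, toReal_measure_eq_sum μ hpq, Finset.sum_product]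
    simp
  have hw : ∀ i j, 0 ≤ w i j := fun i j => ENNReal.toReal_nonneg
  have hwa : ∀ i j, w i j ≤ a i := fun i j =>
    ha i ▸ Finset.single_le_sum (f := w i) (fun j _ => hw i j) (Finset.mem_univ j)
  have hwb : ∀ i j, w i j ≤ b j := fun i j =>
    hb j ▸ Finset.single_le_sum (f := fun i => w i j) (fun i _ => hw i j) (Finset.mem_univ i)
  have hA : ∑ i, a i = 1 := by
    have := toReal_measure_eq_sum μ hp Finset.univ
    simpa using this.symm
  have hB : ∑ j, b j = 1 := by
    have := toReal_measure_eq_sum μ hq Finset.univ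
    simpa using this.symm
  have e1 : ∑ i, ∑ j, -w i j * Real.log (a i) = ∑ i, Real.negMulLog (a i) := by
    refine Finset.sum_congr rfl fun i _ => ?_
    rw [← Finset.sum_mul, Finset.sum_neg_distrib, ha, Real.negMulLog]
  have e2 : ∑ i, ∑ j, -w i j * Real.log (b j) = ∑ j, Real.negMulLog (b j) := by
    rw [Finset.sum_comm]
    refine Finset.sum_congr rfl fun j _ => ?_
    rw [← Finset.sum_mul, Finset.sum_neg_distrib, hb, Real.negMulLog]
  have e3 : ∑ i, ∑ j, (a i * b j - w i j) = 0 := by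
    simp only [Finset.sum_sub_distrib, ha]
    rw [← Finset.sum_mul_sum, hA, hB]
    norm_num
  calc partInfo μ (fun x => (p x, q x)) = ∑ i, ∑ j, Real.negMulLog (w i j) := by
        unfold partInfo
        rw [Fintype.sum_prod_type]
    _ ≤ ∑ i, ∑ j, (-w i j * Real.log (a i) + -w i j * Real.log (b j) + (a i * b j - w i j)) :=
        Finset.sum_le_sum fun i _ => Finset.sum_le_sum fun j _ =>
          negMulLog_le_of_le (hw i j) (hwa i j) (hwb i j)
    _ = partInfo μ p + partInfo μ q := by
        simp only [Finset.sum_add_distrib]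
        rw [e1, e2, e3, add_zero]
        rfl

/-- Entropy of a product partition for a product measure. -/
lemma partInfo_prod (μ : Measure X) [IsProbabilityMeasure μ] {ι : Type} [Fintype ι]
    [MeasurableSpace ι] [MeasurableSingletonClass ι] {p : X → ι} (hp : Measurable p) :
    partInfo (μ.prod μ) (Prod.map p p) = 2 * partInfo μ p := by
  have hA : ∑ i, (μ (p ⁻¹' {i})).toReal = 1 := by
    have := toReal_measure_eq_sum μ hp Finset.univ
    simpa using this.symm
  have h : ∀ i j, ((μ.prod μ) (Prod.map p p ⁻¹' {(i, j)})).toReal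
      = (μ (p ⁻¹' {i})).toReal * (μ (p ⁻¹' {j})).toReal := fun i j => by
    have h1 : Prod.map p p ⁻¹' {(i, j)} = (p ⁻¹' {i}) ×ˢ (p ⁻¹' {j}) := by
      ext x; simp [Prod.ext_iff]
    rw [h1, Measure.prod_prod, ENNReal.toReal_mul]
  unfold partInfo
  rw [Fintype.sum_prod_type]
  simp only [h, Real.negMulLog_mul, Finset.sum_add_distrib, ← Finset.sum_mul, ← Finset.mul_sum,
    hA, one_mul]
  ring

lemma measurable_refinePart {f : X → X} (hf : Measurable f) {ι : Type} [MeasurableSpace ι]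
    {p : X → ι} (hp : Measurable p) (n : ℕ) : Measurable (refinePart f p n) :=
  measurable_pi_lambda _ fun k => hp.comp (hf.iterate k)

/-- `H(⋁_{k<n} f^{-k} p) ≤ n H(p)` for an invariant measure. -/
lemma partInfo_refinePart_le {μ : Measure X} [IsProbabilityMeasure μ] {f : X → X}
    (hf : MeasurePreserving f μ μ) {ι : Type} [Fintype ι] [MeasurableSpace ι]
    [MeasurableSingletonClass ι] {p : X → ι} (hp : Measurable p) (n : ℕ) :
    partInfo μ (refinePart f p n) ≤ n * partInfo μ p := by
  induction n with
  | zero =>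
    have : ∀ i, refinePart f p 0 ⁻¹' {i} = Set.univ := fun i => by
      ext x; simp [Subsingleton.elim (refinePart f p 0 x) i]
    simp [partInfo, this]
  | succ n ih =>
    have h1 : refinePart f p (n + 1) =
        (fun q : (Fin n → ι) × ι => (Fin.snoc q.1 q.2 : Fin (n + 1) → ι))
        ∘ fun x => (refinePart f p n x, (p ∘ f^[n]) x) := by
      funext x k
      refine Fin.lastCases ?_ (fun k => ?_) k <;> simp [refinePart]
    have hm := measurable_refinePart hf.measurable hp n
    have hm' : Measurable (p ∘ f^[n]) := hp.comp (hf.measurable.iterate n)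
    rw [h1]
    refine (partInfo_mono μ (hm.prodMk hm') _).trans ((partInfo_pair_le μ hm hm').trans ?_)
    rw [partInfo_comp (hf.iterate n) hp]
    push_cast
    linarith

lemma bddBelow_entropy (μ : Measure X) [IsProbabilityMeasure μ] (f : X → X) {ι : Type}
    [Fintype ι] (p : X → ι) :
    BddBelow (Set.range fun n : ℕ => partInfo μ (refinePart f p (n + 1)) / (n + 1)) := by
  refine ⟨0, ?_⟩
  rintro _ ⟨n, rfl⟩
  exact div_nonneg (partInfo_nonneg _ _) (by positivity)

/-- If `p` and `d` together determine `r`, then `h(r) ≤ h(p) + H(d)`. -/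
lemma entropyOfPart_le_add {μ : Measure X} [IsProbabilityMeasure μ] {f : X → X}
    (hf : MeasurePreserving f μ μ) {ι κ σ : Type} [Fintype ι] [MeasurableSpace ι]
    [MeasurableSingletonClass ι] [Fintype κ] [MeasurableSpace κ] [MeasurableSingletonClass κ]
    [Fintype σ] {p : X → ι} (hp : Measurable p) {d : X → κ} (hd : Measurable d)
    (g : ι × κ → σ) :
    entropyOfPart μ f (fun x => g (p x, d x)) ≤ entropyOfPart μ f p + partInfo μ d := by
  rw [← sub_le_iff_le_add]
  refine le_ciInf fun n => ?_
  rw [sub_le_iff_le_add]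
  refine (ciInf_le (bddBelow_entropy μ f _) n).trans ?_
  have hn : (0 : ℝ) < n + 1 := by positivity
  rw [div_le_iff₀ hn, add_mul, div_mul_cancel₀ _ hn.ne']
  have h1 : refinePart f (fun x => g (p x, d x)) (n + 1) =
      (fun q : (Fin (n + 1) → ι) × (Fin (n + 1) → κ) => fun k => g (q.1 k, q.2 k))
        ∘ fun x => (refinePart f p (n + 1) x, refinePart f d (n + 1) x) := rfl
  have hm := measurable_refinePart hf.measurable hp (n + 1)
  have hm' := measurable_refinePart hf.measurable hd (n + 1)
  have h2 := partInfo_refinePart_le hf hd (n + 1)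
  rw [h1]
  refine (partInfo_mono μ (hm.prodMk hm') _).trans ((partInfo_pair_le μ hm hm').trans ?_)
  push_cast at h2
  linarith

lemma entropyOfPart_prod {μ : Measure X} [IsProbabilityMeasure μ] {f : X → X}
    (hf : Measurable f) {ι : Type} [Fintype ι] [MeasurableSpace ι]
    [MeasurableSingletonClass ι] {p : X → ι} (hp : Measurable p) :
    entropyOfPart (μ.prod μ) (Prod.map f f) (Prod.map p p) = 2 * entropyOfPart μ f p := by
  unfold entropyOfPart
  rw [Real.mul_iInf_of_nonneg (by norm_num)]
  congr 1
  funext n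
  have hm := measurable_refinePart hf hp (n + 1)
  have hm2 := measurable_refinePart (hf.prodMap hf) (hp.prodMap hp) (n + 1)
  rw [← mul_div_assoc, ← partInfo_prod μ hm]
  congr 1
  have h1 : refinePart (Prod.map f f) (Prod.map p p) (n + 1) =
      (fun q : (Fin (n + 1) → ι) × (Fin (n + 1) → ι) => fun k => (q.1 k, q.2 k))
        ∘ Prod.map (refinePart f p (n + 1)) (refinePart f p (n + 1)) := by
    funext x k
    simp only [refinePart, Prod.map_iterate]
    rfl
  have h2 : Prod.map (refinePart f p (n + 1)) (refinePart f p (n + 1)) =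
      (fun q : Fin (n + 1) → ι × ι => (fun k => (q k).1, fun k => (q k).2))
        ∘ refinePart (Prod.map f f) (Prod.map p p) (n + 1) := by
    funext x
    simp only [refinePart, Prod.map_iterate, Function.comp_apply]
    rfl
  apply le_antisymm
  · rw [h1]
    exact partInfo_mono _ (hm.prodMap hm) _
  · rw [h2]
    exact partInfo_mono _ hm2 _

/-- A partition one of whose pieces (labelled `0`) has almost full measure has small
entropy. -/
lemma exists_partInfo_le (m : ℕ) {δ : ℝ} (hδ : 0 < δ) :
    ∃ η > 0, ∀ (Y : Type _) [MeasurableSpace Y] (μ : Measure Y) [IsProbabilityMeasure μ]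
      (d : Y → Fin (m + 1)), Measurable d → (μ {y | d y ≠ 0}).toReal < η →
      partInfo μ d ≤ δ := by
  have hG : Continuous fun w : Fin (m + 1) → ℝ => ∑ i, Real.negMulLog (w i) :=
    continuous_finsetSum _ fun i _ => Real.continuous_negMulLog.comp (continuous_apply i)
  let w₀ : Fin (m + 1) → ℝ := fun i => if i = 0 then 1 else 0
  have hG0 : ∑ i, Real.negMulLog (w₀ i) = 0 :=
    Finset.sum_eq_zero fun i _ => by by_cases h : i = 0 <;> simp [w₀, h]
  obtain ⟨η, hη, hGη⟩ := Metric.continuous_iff.1 hG w₀ δ hδ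
  refine ⟨η, hη, fun Y _ μ _ d hd hdη => ?_⟩
  have h := hGη (fun i => (μ (d ⁻¹' {i})).toReal) ?_
  · rw [hG0, Real.dist_0_eq_abs] at h
    exact (le_abs_self _).trans h.le
  · rw [dist_pi_lt_iff hη]
    intro i
    by_cases hi : i = 0
    · subst hi
      have h1 : (d ⁻¹' {0}) = {y | d y ≠ 0}ᶜ := by ext; simp
      have h2 : MeasurableSet {y | d y ≠ 0} := by
        rw [show {y | d y ≠ 0} = (d ⁻¹' {0})ᶜ by ext; simp]
        exact (hd (measurableSet_singleton 0)).compl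
      have h3 : (μ (d ⁻¹' {0})).toReal = 1 - (μ {y | d y ≠ 0}).toReal := by
        rw [h1]
        exact probReal_compl_eq_one_sub h2
      simp only [w₀, if_true, h3, Real.dist_eq]
      rw [sub_sub_cancel_left, abs_neg, abs_of_nonneg ENNReal.toReal_nonneg]
      exact hdη
    · simp only [w₀, if_neg hi, Real.dist_0_eq_abs, abs_of_nonneg ENNReal.toReal_nonneg]
      refine lt_of_le_of_lt (ENNReal.toReal_mono (measure_ne_top _ _) (measure_mono ?_)) hdη
      intro y hy
      simp only [Set.mem_preimage, Set.mem_singleton_iff] at hy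
      simpa [hy] using hi

/-- The algebra of subsets of `X × X` that are unions of cells of `ξ × ξ` for some finite
measurable partition `ξ` of `X`. -/
def cellAlgebra (X : Type*) [MeasurableSpace X] : Set (Set (X × X)) :=
  {A | ∃ (N : ℕ) (p : X → Fin N), Measurable p ∧
    ∃ B : Set (Fin N × Fin N), A = Prod.map p p ⁻¹' B}

lemma preimage_mem_cellAlgebra {ι : Type} [Fintype ι] [MeasurableSpace ι]
    [DiscreteMeasurableSpace ι] {p : X → ι} (hp : Measurable p) (B : Set (ι × ι)) :
    Prod.map p p ⁻¹' B ∈ cellAlgebra X := by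
  let e := Fintype.equivFin ι
  refine ⟨_, e ∘ p, (Measurable.of_discrete (f := e)).comp hp,
    Prod.map e.symm e.symm ⁻¹' B, ?_⟩
  ext x
  simp [Prod.map]

lemma isSetAlgebra_cellAlgebra : IsSetAlgebra (cellAlgebra X) where
  empty_mem := ⟨1, fun _ => 0, measurable_const, ∅, by simp⟩
  compl_mem := by
    rintro _ ⟨N, p, hp, B, rfl⟩
    exact ⟨N, p, hp, Bᶜ, rfl⟩
  union_mem := by
    rintro _ _ ⟨N, p, hp, B, rfl⟩ ⟨M, q, hq, C, rfl⟩
    exact preimage_mem_cellAlgebra (hp.prodMk hq)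
      {z | (z.1.1, z.2.1) ∈ B ∨ (z.1.2, z.2.2) ∈ C}

lemma generateFrom_cellAlgebra :
    (Prod.instMeasurableSpace : MeasurableSpace (X × X)) =
      MeasurableSpace.generateFrom (cellAlgebra X) := by
  apply le_antisymm
  · rw [← generateFrom_prod]
    refine MeasurableSpace.generateFrom_mono ?_
    rintro _ ⟨S, hS, T, hT, rfl⟩
    have hp : Measurable fun x => (x ∈ S, x ∈ T) :=
      (measurable_mem.2 hS).prodMk (measurable_mem.2 hT)
    exact preimage_mem_cellAlgebra hp {z | z.1.1 ∧ z.2.2}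
  · refine MeasurableSpace.generateFrom_le ?_
    rintro _ ⟨N, p, hp, B, rfl⟩
    exact (hp.prodMap hp) (Set.toFinite B).measurableSet

/-- Product partitions `ξ × ξ` compute the entropy on `X × X` up to an arbitrarily small error:
a measurable partition `r` agrees with a function `g` of the cell of some `ξ × ξ` outside a set
of small measure, and the partition `d` recording the value of `r` on that exceptional set has
small entropy. -/
lemma entropyOfPart_le_prod {μ : Measure X} [IsProbabilityMeasure μ] {f : X → X}
    (hf : MeasurePreserving f μ μ) {m : ℕ} {r : X × X → Fin m} (hr : Measurable r)
    {δ : ℝ} (hδ : 0 < δ) :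
    ∃ (N : ℕ) (p : X → Fin N), Measurable p ∧
      entropyOfPart (μ.prod μ) (Prod.map f f) r ≤ 2 * entropyOfPart μ f p + δ := by
  classical
  obtain ⟨η, hη, hsmall⟩ := exists_partInfo_le m hδ
  have hdense : (μ.prod μ).MeasureDense (cellAlgebra X) :=
    Measure.MeasureDense.of_generateFrom_isSetAlgebra_finite _ isSetAlgebra_cellAlgebra
      generateFrom_cellAlgebra
  have hη' : 0 < η / (m + 1) := by positivity
  choose A hA hAη using fun i : Fin m => hdense.approx (r ⁻¹' {i})
    (hr (measurableSet_singleton i)) (measure_ne_top _ _) (η / (m + 1)) hη'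
  choose N p hp B hB using hA
  let q : X → ∀ i, Fin (N i) := fun x i => p i x
  have hq : Measurable q := measurable_pi_lambda _ hp
  obtain ⟨z₀⟩ : Nonempty (X × X) := nonempty_of_isProbabilityMeasure (μ.prod μ)
  let g : (∀ i, Fin (N i)) × (∀ i, Fin (N i)) → Fin m := fun c =>
    if h : ∃ i, (c.1 i, c.2 i) ∈ B i then h.choose else r z₀
  let Q : X × X → (∀ i, Fin (N i)) × (∀ i, Fin (N i)) := Prod.map q q
  have hQ : Measurable Q := hq.prodMap hq
  let d : X × X → Fin (m + 1) := fun z => if r z = g (Q z) then 0 else (r z).succ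
  have hgQ : Measurable (g ∘ Q) := (measurable_of_finite g).comp hQ
  have hd : Measurable d := Measurable.ite (measurableSet_eq_fun hr hgQ) measurable_const
    ((measurable_of_finite Fin.succ).comp hr)
  have hbad : {z | d z ≠ 0} ⊆ ⋃ i, symmDiff (r ⁻¹' {i}) (A i) := by
    intro z hz
    by_contra hcon
    apply hz
    have hiff : ∀ i, (r z = i ↔ ((Q z).1 i, (Q z).2 i) ∈ B i) := by
      intro i
      simp only [Set.mem_iUnion, not_exists, Set.mem_symmDiff, hB] at hcon
      have := hcon i
      simp only [Set.mem_preimage, Set.mem_singleton_iff] at this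
      change r z = i ↔ Prod.map (p i) (p i) z ∈ B i
      tauto
    have hex : ∃ i, ((Q z).1 i, (Q z).2 i) ∈ B i := ⟨r z, (hiff _).1 rfl⟩
    have : r z = g (Q z) := by
      simp only [g, dif_pos hex]
      exact (hiff _).2 hex.choose_spec
    simp [d, this]
  have hμ : ((μ.prod μ) {z | d z ≠ 0}).toReal < η := by
    have h1 : (μ.prod μ) {z | d z ≠ 0} ≤ ENNReal.ofReal (m * (η / (m + 1))) := by
      calc (μ.prod μ) {z | d z ≠ 0} ≤ ∑ i, (μ.prod μ) (symmDiff (r ⁻¹' {i}) (A i)) :=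
            (measure_mono hbad).trans (measure_iUnion_fintype_le _ _)
        _ ≤ ∑ i : Fin m, ENNReal.ofReal (η / (m + 1)) :=
            Finset.sum_le_sum fun i _ => (hAη i).le
        _ = ENNReal.ofReal (m * (η / (m + 1))) := by
            rw [ENNReal.ofReal_mul (Nat.cast_nonneg m)]
            simp
    have h2 := ENNReal.toReal_le_of_le_ofReal (by positivity) h1
    refine h2.trans_lt ?_
    rw [mul_div_assoc', div_lt_iff₀ (by positivity)]
    nlinarith
  have hrd : r = fun z => (fun c : ((∀ i, Fin (N i)) × (∀ i, Fin (N i))) × Fin (m + 1) =>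
      Fin.cases (motive := fun _ => Fin m) (g c.1) id c.2) (Q z, d z) := by
    funext z
    by_cases h : r z = g (Q z) <;> simp [d, h]
  let e := Fintype.equivFin (∀ i, Fin (N i))
  have he : Measurable (e ∘ q) := (measurable_of_finite e).comp hq
  refine ⟨_, e ∘ q, he, ?_⟩
  have hF : MeasurePreserving (Prod.map f f) (μ.prod μ) (μ.prod μ) := hf.prod hf
  have h1 := entropyOfPart_le_add hF (he.prodMap he) hd
    (fun c => Fin.cases (motive := fun _ => Fin m) (g (Prod.map e.symm e.symm c.1)) id c.2)
  have h2 : (fun z => Fin.cases (motive := fun _ => Fin m)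
      (g (Prod.map e.symm e.symm (Prod.map (e ∘ q) (e ∘ q) z))) id (d z)) = r := by
    conv_rhs => rw [hrd]
    funext z
    simp [Q, Prod.map]
  simp only [h2] at h1
  rw [entropyOfPart_prod hf.measurable he] at h1
  have h3 := hsmall (X × X) (μ.prod μ) d hd hμ
  linarith

/-- `h_{μ×μ}(f×f) = 2 h_μ(f)`. -/
lemma entropyKS_prod {μ : Measure X} [IsProbabilityMeasure μ] {f : X → X}
    (hf : MeasurePreserving f μ μ) :
    entropyKS (μ.prod μ) (Prod.map f f) = 2 * entropyKS μ f := by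
  unfold entropyKS
  refine sSup_eq_two_mul ⟨_, 1, fun _ => 0, fun i => measurable_const
    (measurableSet_singleton i), rfl⟩ ?_ ?_
  · rintro _ ⟨m, p, hp, rfl⟩
    have hp' : Measurable p := measurable_to_countable' hp
    have hP : Measurable (finProdFinEquiv ∘ Prod.map p p) :=
      (measurable_of_finite finProdFinEquiv).comp (hp'.prodMap hp')
    refine ⟨_, ⟨m * m, finProdFinEquiv ∘ Prod.map p p,
      fun i => hP (measurableSet_singleton i), rfl⟩, ?_⟩
    rw [← entropyOfPart_prod hf.measurable hp']
    -- Relabelling by an injection does not change entropy: apply the comparison with the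
    -- trivial partition as the additional one.
    have h := entropyOfPart_le_add (hf.prod hf) hP (measurable_const (a := ()))
      (fun c => finProdFinEquiv.symm c.1)
    have h0 : partInfo (μ.prod μ) (fun _ => ()) = 0 := by
      simp [partInfo]
    simpa [h0] using h
  · rintro _ ⟨m, r, hr, rfl⟩ δ hδ
    obtain ⟨N, p, hp, h⟩ := entropyOfPart_le_prod hf (measurable_to_countable' hr) hδ
    exact ⟨_, ⟨N, p, fun i => hp (measurableSet_singleton i), rfl⟩, h⟩

end Entropy

/-- **Corollary 3.3.** If `μ` is an equilibrium state for a subadditive potential `Φ`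
on an expansive homeomorphism `(X,f)` of a compact metric space, then `μ×μ` is an
equilibrium state for the subadditive potential `Ψ`, `ψ_n(x,y) = φ_n(x)·φ_n(y)`, on
`(X×X, f×f)`. -/
theorem product_measure_isEqState
    {X : Type*} [MetricSpace X] [CompactSpace X] [MeasurableSpace X] [BorelSpace X]
    (f finv : X → X) (hf : Continuous f) (hfinv : Continuous finv)
    (hleft : Function.LeftInverse finv f) (hright : Function.RightInverse finv f)
    (hexp : IsExpansive dist f finv)
    (φ : ℕ → X → ℝ) (hφ : IsSubadditivePotential f φ)
    (μ : Measure X) (hEq : IsEqState dist f φ μ) :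
    IsEqState dist (Prod.map f f) (fun n p => φ n p.1 * φ n p.2) (μ.prod μ) := by
  obtain ⟨hprob, hinv, L, hL, hsum⟩ := hEq
  have hc := hφ.1
  have hpos := hφ.2.1
  have : Nonempty X := nonempty_of_isProbabilityMeasure μ
  have hint : ∀ n, Integrable (fun x => Real.log (φ n x)) μ := fun n =>
    ((hc n).log fun x => (hpos n x).ne').integrable_of_hasCompactSupport
      (HasCompactSupport.of_compactSpace _)
  have hlow : ∀ᶠ n : ℕ in atTop, ∃ x, L - 1 ≤ Real.log (φ n x) / n := by
    filter_upwards [hL.eventually_const_le (sub_one_lt L)] with n hn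
    obtain ⟨x, hx⟩ := exists_integral_le (hint n)
    exact ⟨x, hn.trans (div_le_div_of_nonneg_right hx (Nat.cast_nonneg n))⟩
  refine ⟨inferInstance, hinv.prod hinv, 2 * L, ?_, ?_⟩
  · have h : ∀ n, ∫ p, Real.log (φ n p.1 * φ n p.2) ∂(μ.prod μ)
        = 2 * ∫ x, Real.log (φ n x) ∂μ := fun n => by
      have h1 : ∀ p : X × X, Real.log (φ n p.1 * φ n p.2)
          = Real.log (φ n p.1) + Real.log (φ n p.2) := fun p =>
        Real.log_mul (hpos n _).ne' (hpos n _).ne'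
      simp only [h1]
      rw [integral_add ((hint n).comp_fst μ) ((hint n).comp_snd μ),
        integral_fun_fst (fun x => Real.log (φ n x)), integral_fun_snd (fun x => Real.log (φ n x))]
      simp
      ring
    simp only [h, mul_div_assoc]
    exact hL.const_mul 2
  · rw [entropyKS_prod hinv, pressure_prod hf hφ hlow, ← hsum]
    ring

end SubEq
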